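/- There exist a constant c > 0 and a real number X₀ such that for all real X ≥ X₀, the number of negative squarefree integers d such that the absolute value of the discriminant of the imaginary quadratic field ℚ(√d) is at most X and the ideal class group Cl(ℚ(√d)) contains a subgroup isomorphic to (ℤ/5ℤ)² is at least c · X^(1/3) / (log X)². -/

import Mathlib

/-!
Let `F(S, T)` be the form `sexticForm`. The curve `y² = F(1, t)` has genus 2 and its Jacobian has
two independent 5-torsion classes, represented by functions `f₁`, `f₂` with norms `N₁(t) ^ 5` and
`N₂(t) ^ 5`. Specialize `t = T / S` for distinct primes `S ≡ T` modulo a fixed integer and write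
`F(S, T) = d * m ^ 2` with `d < 0` squarefree. Then `f₁`, `f₂` become elements of `ℤ[√d]` that have
fifth powers as norms and are coprime to their conjugates, so they generate fifth powers `I ^ 5`,
`J ^ 5` of ideals of `ℚ(√d)`. As the units `±1` are fifth powers, a relation between the classes of
`I` and `J` would make a product of powers of `f₁` and `f₂` a fifth power; the fifth power residue
characters at `31` and `131`, evaluated at `t = 1`, exclude this.

For the count, take `S` and `T` among the primes in `(√n, n]`. Both divide `d`, and `|d| ≪ n ^ 6`
has at most 12 prime factors larger than `√n`, so each `d` arises from a bounded number of the
`≫ (n / log n) ^ 2` pairs. The theorem follows with `n` of the order of `X ^ (1 / 6)`.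
-/

open NumberField

/-- `d` is a negative squarefree integer such that the imaginary quadratic field
`ℚ(√d)` (characterized as a degree-2 number field containing a square root of `d`)
has `|discriminant| ≤ X` and its ideal class group contains a subgroup isomorphic
to `(ℤ/5ℤ)²`. -/
def GoodRank5sq (X : ℝ) (d : ℤ) : Prop :=
  d < 0 ∧ Squarefree d ∧
  ∀ (K : Type) [Field K] [NumberField K],
    (∃ x : K, x * x = (d : K)) → Module.finrank ℚ K = 2 →
      (|NumberField.discr K| : ℝ) ≤ X ∧
      ∃ f : Multiplicative (ZMod 5 × ZMod 5) →* ClassGroup (𝓞 K), Function.Injective f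

section TwoGenerators

lemma exists_injective_monoidHom_of_pow_mul_pow {G : Type*} [CommGroup G] {n : ℕ} [NeZero n]
    {x y : G} (hx : x ^ n = 1) (hy : y ^ n = 1)
    (hxy : ∀ i < n, ∀ j < n, x ^ i * y ^ j = 1 → i = 0 ∧ j = 0) :
    ∃ f : Multiplicative (ZMod n × ZMod n) →* G, Function.Injective f := by
  let f : Multiplicative (ZMod n × ZMod n) →* G :=
    { toFun a := x ^ a.toAdd.1.val * y ^ a.toAdd.2.val
      map_one' := by simp
      map_mul' a b := by
        simp only [toAdd_mul, Prod.fst_add, Prod.snd_add, ZMod.val_add, ← pow_eq_pow_mod _ hx,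
          ← pow_eq_pow_mod _ hy, pow_add]
        exact mul_mul_mul_comm _ _ _ _ }
  refine ⟨f, (injective_iff_map_eq_one f).2 fun a ha ↦ ?_⟩
  obtain ⟨h₁, h₂⟩ := hxy _ (ZMod.val_lt _) _ (ZMod.val_lt _) ha
  exact Prod.ext ((ZMod.val_eq_zero _).1 h₁) ((ZMod.val_eq_zero _).1 h₂)

variable {R : Type*} [CommRing R] [IsDedekindDomain R]

lemma exists_span_singleton_eq_pow {a a' c : R} {n : ℕ} (hcop : IsCoprime a a')
    (h : a * a' = c ^ n) : ∃ I : Ideal R, Ideal.span {a} = I ^ n := by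
  refine exists_eq_pow_of_mul_eq_pow_of_coprime
    ((Ideal.isCoprime_span_singleton_iff a a').2 hcop) (c := Ideal.span {c}) ?_
  rw [Ideal.span_singleton_mul_span_singleton, h, Ideal.span_singleton_pow]

lemma exists_eq_pow_of_span_singleton_eq_pow {n : ℕ} (hu : ∀ u : Rˣ, ∃ v : R, v ^ n = u) {a c : R}
    (h : Ideal.span {a} = Ideal.span {c} ^ n) : ∃ e : R, a = e ^ n := by
  rw [Ideal.span_singleton_pow, Ideal.span_singleton_eq_span_singleton] at h
  obtain ⟨u, rfl⟩ := h.symm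
  obtain ⟨v, hv⟩ := hu u
  exact ⟨c * v, by rw [mul_pow, hv]⟩

theorem exists_injective_zmod_prod_classGroup {n : ℕ} [NeZero n]
    (hu : ∀ u : Rˣ, ∃ v : R, v ^ n = u) {a a' b b' r s : R} (ha : a ≠ 0) (hb : b ≠ 0)
    (haa' : IsCoprime a a') (hbb' : IsCoprime b b') (har : a * a' = r ^ n) (hbs : b * b' = s ^ n)
    (hab : ∀ i < n, ∀ j < n, (∃ c : R, a ^ i * b ^ j = c ^ n) → i = 0 ∧ j = 0) :
    ∃ f : Multiplicative (ZMod n × ZMod n) →* ClassGroup R, Function.Injective f := by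
  have ne_zero_of_span {x : R} {L : Ideal R} (hx : x ≠ 0) (hL : Ideal.span {x} = L ^ n) :
      L ∈ nonZeroDivisors (Ideal R) := by
    refine mem_nonZeroDivisors_of_ne_zero fun h ↦ hx ?_
    rwa [h, Ideal.zero_eq_bot, Ideal.bot_pow (NeZero.ne n), Ideal.span_singleton_eq_bot] at hL
  obtain ⟨I, hI⟩ := exists_span_singleton_eq_pow haa' har
  obtain ⟨J, hJ⟩ := exists_span_singleton_eq_pow hbb' hbs
  let I₀ : nonZeroDivisors (Ideal R) := ⟨I, ne_zero_of_span ha hI⟩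
  let J₀ : nonZeroDivisors (Ideal R) := ⟨J, ne_zero_of_span hb hJ⟩
  apply exists_injective_monoidHom_of_pow_mul_pow (x := ClassGroup.mk0 I₀) (y := ClassGroup.mk0 J₀)
  · rw [← map_pow, SubmonoidClass.mk_pow, ClassGroup.mk0_eq_one_iff, ← hI]
    exact ⟨a, rfl⟩
  · rw [← map_pow, SubmonoidClass.mk_pow, ClassGroup.mk0_eq_one_iff, ← hJ]
    exact ⟨b, rfl⟩
  · intro i hi j hj hij
    rw [← map_pow, ← map_pow, ← map_mul, SubmonoidClass.mk_pow, SubmonoidClass.mk_pow,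
      MulMemClass.mk_mul_mk, ClassGroup.mk0_eq_one_iff] at hij
    obtain ⟨c, hc : I ^ i * J ^ j = Ideal.span {c}⟩ := hij
    refine hab i hi j hj (exists_eq_pow_of_span_singleton_eq_pow hu (c := c) ?_)
    rw [← hc, ← Ideal.span_singleton_mul_span_singleton, ← Ideal.span_singleton_pow,
      ← Ideal.span_singleton_pow, hI, hJ, mul_pow, ← pow_mul, ← pow_mul, ← pow_mul, ← pow_mul,
      mul_comm n, mul_comm n]

end TwoGenerators

section QuadraticExtension

lemma algebraTrace_quadraticAlgebra {R : Type*} [CommRing R] {a b : R}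
    (z : QuadraticAlgebra R a b) :
    Algebra.trace R (QuadraticAlgebra R a b) z = z.trace := by
  rw [Algebra.trace_eq_matrix_trace (QuadraticAlgebra.basis a b), Matrix.trace_fin_two]
  simp [Algebra.leftMulMatrix_eq_repr_mul, QuadraticAlgebra.basis, QuadraticAlgebra.trace_def,
    two_mul, add_assoc]

lemma algebraNorm_quadraticAlgebra {R : Type*} [CommRing R] {a b : R}
    (z : QuadraticAlgebra R a b) :
    Algebra.norm R z = z.norm :=
  QuadraticAlgebra.det_toLinearMap_eq_norm z

variable {F L : Type*} [Field F] [Field L] [Algebra F L] {a : F} {x : L}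

lemma exists_quadraticAlgebra_algEquiv (hL : Module.finrank F L = 2) (ha : ¬IsSquare a)
    (hx : x * x = algebraMap F L a) :
    ∃ e : QuadraticAlgebra F a 0 ≃ₐ[F] L,
      ∀ z, e z = algebraMap F L z.re + algebraMap F L z.im * x := by
  have : Fact (∀ r : F, r ^ 2 ≠ a + 0 * r) :=
    ⟨fun r hr ↦ ha ⟨r, by linear_combination -hr⟩⟩
  have hx' : x * x = a • 1 + (0 : F) • x := by
    rw [hx, zero_smul, add_zero, Algebra.smul_def, mul_one]
  let f := QuadraticAlgebra.lift ⟨x, hx'⟩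
  have : FiniteDimensional F L := Module.finite_of_finrank_eq_succ hL
  have hf : Function.Surjective f :=
    (LinearMap.injective_iff_surjective_of_finrank_eq_finrank (f := f.toLinearMap)
      ((QuadraticAlgebra.finrank_eq_two a 0).trans hL.symm)).1 f.injective
  refine ⟨AlgEquiv.ofBijective f ⟨f.injective, hf⟩, fun z ↦ ?_⟩
  simp [f, QuadraticAlgebra.lift, Algebra.smul_def]

lemma exists_eq_algebraMap_add_algebraMap_mul (hL : Module.finrank F L = 2) (ha : ¬IsSquare a)
    (hx : x * x = algebraMap F L a) (y : L) :
    ∃ p q : F, y = algebraMap F L p + algebraMap F L q * x := by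
  obtain ⟨e, he⟩ := exists_quadraticAlgebra_algEquiv hL ha hx
  exact ⟨(e.symm y).re, (e.symm y).im, by rw [← he, e.apply_symm_apply]⟩

lemma algebraTrace_add_mul (hL : Module.finrank F L = 2) (ha : ¬IsSquare a)
    (hx : x * x = algebraMap F L a) (p q : F) :
    Algebra.trace F L (algebraMap F L p + algebraMap F L q * x) = 2 * p := by
  obtain ⟨e, he⟩ := exists_quadraticAlgebra_algEquiv hL ha hx
  rw [← he ⟨p, q⟩, Algebra.trace_eq_of_algEquiv, algebraTrace_quadraticAlgebra,
    QuadraticAlgebra.trace_def, zero_mul, add_zero]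

lemma algebraNorm_add_mul (hL : Module.finrank F L = 2) (ha : ¬IsSquare a)
    (hx : x * x = algebraMap F L a) (p q : F) :
    Algebra.norm F (algebraMap F L p + algebraMap F L q * x) = p ^ 2 - a * q ^ 2 := by
  obtain ⟨e, he⟩ := exists_quadraticAlgebra_algEquiv hL ha hx
  rw [← he ⟨p, q⟩, Algebra.norm_eq_of_algEquiv, algebraNorm_quadraticAlgebra,
    QuadraticAlgebra.norm_def]
  ring

end QuadraticExtension

section QuadraticNumberField

lemma exists_eq_intCast_of_sq_mul_eq {d e : ℤ} (hd : Squarefree d) {q : ℚ} (h : q ^ 2 * d = e) :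
    ∃ m : ℤ, q = m := by
  have key : q.num ^ 2 * d = e * (q.den : ℤ) ^ 2 := by
    rw [← Rat.num_div_den q, div_pow, div_mul_eq_mul_div, div_eq_iff (by simp)] at h
    exact_mod_cast h
  have hdvd : (q.den : ℤ) ^ 2 ∣ d :=
    (q.isCoprime_num_den.symm.pow (m := 2) (n := 2)).dvd_of_dvd_mul_left ⟨e, by rw [key, mul_comm]⟩
  have hden : IsUnit (q.den : ℤ) := hd _ (by rwa [← sq])
  exact ⟨q.num, (Rat.den_eq_one_iff q).1 (Nat.isUnit_iff.1 (Int.ofNat_isUnit.1 hden)) |>.symm⟩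

variable {K : Type*} [Field K] {d : ℤ}

lemma exists_integer_mul_self_eq (h : ∃ x : K, x * x = d) : ∃ D : 𝓞 K, D * D = d := by
  obtain ⟨x, hx⟩ := h
  have hint : IsIntegral ℤ x := .of_pow two_pos (by rw [sq, hx]; exact isIntegral_algebraMap)
  obtain ⟨D, rfl⟩ : ∃ D : 𝓞 K, (D : K) = x := ⟨⟨x, hint⟩, rfl⟩
  exact ⟨D, RingOfIntegers.coe_injective (by rw [map_mul, map_intCast, hx])⟩

variable [NumberField K]

lemma coe_mul_self_eq_algebraMap (D : {D : 𝓞 K // D * D = d}) :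
    ((D : 𝓞 K) : K) * (D : 𝓞 K) = algebraMap ℚ K d := by
  rw [← map_mul, D.2]
  simp

section NotSquare

variable (hK : Module.finrank ℚ K = 2) (hd : ¬IsSquare d) (D : {D : 𝓞 K // D * D = d})
include hK hd

lemma trace_zsqrtd_lift (α : ℤ√d) : Algebra.trace ℤ (𝓞 K) (Zsqrtd.lift D α) = 2 * α.re := by
  have h := algebraTrace_add_mul hK (mt Rat.isSquare_intCast_iff.1 hd)
    (coe_mul_self_eq_algebraMap D) α.re α.im
  rw [← Int.cast_inj (α := ℚ), Algebra.coe_trace_int]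
  simpa using h

lemma norm_zsqrtd_lift (α : ℤ√d) : Algebra.norm ℤ (Zsqrtd.lift D α) = α.norm := by
  have h := algebraNorm_add_mul hK (mt Rat.isSquare_intCast_iff.1 hd)
    (coe_mul_self_eq_algebraMap D) α.re α.im
  rw [← Int.cast_inj (α := ℚ), Algebra.coe_norm_int]
  simpa [Zsqrtd.norm_def, sq, mul_assoc] using h

end NotSquare

lemma exists_two_mul_eq_zsqrtd_lift (hK : Module.finrank ℚ K = 2) (hd : ¬IsSquare d)
    (hsf : Squarefree d) (D : {D : 𝓞 K // D * D = d}) (z : 𝓞 K) :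
    ∃ α : ℤ√d, 2 * z = Zsqrtd.lift D α := by
  have hd' : ¬IsSquare (d : ℚ) := mt Rat.isSquare_intCast_iff.1 hd
  have hD := coe_mul_self_eq_algebraMap D
  obtain ⟨p, q, hpq⟩ := exists_eq_algebraMap_add_algebraMap_mul hK hd' hD z
  have htrace : (Algebra.trace ℤ (𝓞 K) z : ℚ) = 2 * p := by
    rw [Algebra.coe_trace_int, hpq, algebraTrace_add_mul hK hd' hD]
  have hnorm : (Algebra.norm ℤ z : ℚ) = p ^ 2 - d * q ^ 2 := by
    rw [Algebra.coe_norm_int, hpq, algebraNorm_add_mul hK hd' hD]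
  obtain ⟨m, hm⟩ := exists_eq_intCast_of_sq_mul_eq (q := 2 * q)
    (e := (Algebra.trace ℤ (𝓞 K) z) ^ 2 - 4 * Algebra.norm ℤ z) hsf (by
      push_cast; rw [htrace, hnorm]; ring)
  refine ⟨⟨Algebra.trace ℤ (𝓞 K) z, m⟩, RingOfIntegers.coe_injective ?_⟩
  have htrace' := congr_arg (algebraMap ℚ K) htrace
  have hm' := congr_arg (algebraMap ℚ K) hm
  simp only [map_intCast, map_mul, map_ofNat] at htrace' hm'
  rw [Zsqrtd.lift_apply_apply, map_mul, map_add, map_mul, map_ofNat, map_intCast, map_intCast,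
    htrace', ← hm']
  linear_combination 2 * hpq

lemma exists_two_pow_mul_eq_pow_of_zsqrtd_lift_eq_pow (hK : Module.finrank ℚ K = 2)
    (hd : ¬IsSquare d) (hsf : Squarefree d) (D : {D : 𝓞 K // D * D = d}) {α : ℤ√d} {n : ℕ} {c : 𝓞 K}
    (h : Zsqrtd.lift D α = c ^ n) : ∃ β : ℤ√d, 2 ^ n * α = β ^ n := by
  obtain ⟨β, hβ⟩ := exists_two_mul_eq_zsqrtd_lift hK hd hsf D c
  refine ⟨β, Zsqrtd.lift_injective D (fun m hm ↦ hd ⟨m, hm⟩) ?_⟩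
  rw [map_mul, map_pow, map_pow, ← hβ, h, mul_pow, map_ofNat]

lemma zsqrtd_eq_two_or_neg_two_of_norm_eq_four {d : ℤ} (hd : d < -4) {α : ℤ√d} (h : α.norm = 4) :
    α = 2 ∨ α = -2 := by
  rw [Zsqrtd.norm_def] at h
  have him : α.im = 0 := by
    by_contra him
    nlinarith [mul_self_nonneg α.re, Int.one_le_abs him, abs_mul_abs_self α.im]
  have hre : α.re = 2 ∨ α.re = -2 := by
    rw [him] at h
    exact sq_eq_sq_iff_eq_or_eq_neg.1 (by linarith)
  exact hre.imp (fun h ↦ Zsqrtd.ext h him) (fun h ↦ Zsqrtd.ext h (by simpa using him))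

lemma units_eq_one_or_neg_one (hK : Module.finrank ℚ K = 2) (hd : d < -4) (hsf : Squarefree d)
    (h : ∃ x : K, x * x = d) (u : (𝓞 K)ˣ) : u = 1 ∨ u = -1 := by
  obtain ⟨D, hD⟩ := exists_integer_mul_self_eq h
  have hd' : ¬IsSquare d := mt IsSquare.nonneg (by linarith)
  obtain ⟨α, hα⟩ := exists_two_mul_eq_zsqrtd_lift hK hd' hsf ⟨D, hD⟩ u
  have hnorm : α.norm = 4 * Algebra.norm ℤ (u : 𝓞 K) := by
    have h2 := norm_zsqrtd_lift hK hd' ⟨D, hD⟩ (2 : ℕ)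
    rw [map_natCast, Zsqrtd.norm_natCast] at h2
    rw [← norm_zsqrtd_lift hK hd' ⟨D, hD⟩, ← hα, map_mul]
    exact congr_arg (· * _) h2
  have hunit : Algebra.norm ℤ (u : 𝓞 K) = 1 := by
    refine (Int.isUnit_iff.1 (u.isUnit.map (Algebra.norm ℤ))).resolve_right fun h ↦ ?_
    have := Zsqrtd.norm_nonneg (by linarith : d ≤ 0) α
    linarith
  rw [hunit, mul_one] at hnorm
  refine (zsqrtd_eq_two_or_neg_two_of_norm_eq_four hd hnorm).imp (fun h ↦ ?_) (fun h ↦ ?_) <;>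
  · rw [h] at hα
    refine Units.ext (mul_left_cancel₀ two_ne_zero ?_)
    simpa using hα

lemma exists_four_mul_eq_discr_mul_sq (hK : Module.finrank ℚ K = 2) (hd : ¬IsSquare d)
    (h : ∃ x : K, x * x = d) : ∃ k : ℤ, 4 * d = discr K * k ^ 2 := by
  obtain ⟨D, hD⟩ := exists_integer_mul_self_eq h
  have htrace (m n : ℤ) : Algebra.trace ℤ (𝓞 K) (m + n * D) = 2 * m := by
    rw [← trace_zsqrtd_lift hK hd ⟨D, hD⟩ ⟨m, n⟩, Zsqrtd.lift_apply_apply]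
  have h1 : Algebra.trace ℤ (𝓞 K) 1 = 2 := by simpa using htrace 1 0
  have h2 : Algebra.trace ℤ (𝓞 K) D = 0 := by simpa using htrace 0 1
  have h3 : Algebra.trace ℤ (𝓞 K) (d : 𝓞 K) = 2 * d := by simpa using htrace d 0
  have hdisc : Algebra.discr ℤ ![1, D] = 4 * d := by
    rw [Algebra.discr_def, Matrix.det_fin_two]
    simp only [Algebra.traceMatrix_apply, Algebra.traceForm_apply, Matrix.cons_val_zero,
      Matrix.cons_val_one, mul_one, one_mul, hD, h1, h2, h3]
    ring
  let b : Module.Basis (Fin 2) ℤ (𝓞 K) :=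
    Module.finBasisOfFinrankEq ℤ (𝓞 K) (by rw [RingOfIntegers.rank, hK])
  refine ⟨(b.toMatrix ![1, D]).det, ?_⟩
  rw [← discr_eq_discr K b, ← hdisc, mul_comm, ← Algebra.discr_of_matrix_vecMul,
    b.toMatrix_map_vecMul]

lemma abs_discr_le_four_mul_abs (hK : Module.finrank ℚ K = 2) (hd : ¬IsSquare d)
    (h : ∃ x : K, x * x = d) : |discr K| ≤ 4 * |d| := by
  obtain ⟨k, hk⟩ := exists_four_mul_eq_discr_mul_sq hK hd h
  have hd0 : 4 * d ≠ 0 := mul_ne_zero four_ne_zero fun h ↦ hd (h ▸ IsSquare.zero)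
  rw [← abs_of_pos (four_pos (α := ℤ)), ← abs_mul]
  exact Int.le_of_dvd (abs_pos.2 hd0) ((abs_dvd_abs _ _).2 ⟨_, hk⟩)

lemma abs_le_abs_discr (hK : Module.finrank ℚ K = 2) (hd : ¬IsSquare d) (hsf : Squarefree d)
    (h : ∃ x : K, x * x = d) : |d| ≤ |discr K| := by
  obtain ⟨k, hk⟩ := exists_four_mul_eq_discr_mul_sq hK hd h
  have hk0 : (k : ℚ) ≠ 0 := by
    rintro hk0
    obtain rfl : k = 0 := by exact_mod_cast hk0
    exact hd (by simp_all)
  obtain ⟨m, hm⟩ := exists_eq_intCast_of_sq_mul_eq (q := 2 / k) (e := discr K) hsf (by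
    have : (4 * d : ℚ) = discr K * k ^ 2 := by exact_mod_cast hk
    field_simp
    linear_combination this)
  have hk2 : |k| ≤ 2 := Int.le_of_dvd two_pos <| (abs_dvd k 2).2 ⟨m, by
    rw [div_eq_iff hk0] at hm
    rw [mul_comm]
    exact_mod_cast hm⟩
  have habs : 4 * |d| = |discr K| * |k| ^ 2 := by
    rw [← abs_pow, ← abs_mul, ← hk, abs_mul, abs_of_pos (four_pos (α := ℤ))]
  have := mul_le_mul_of_nonneg_left (pow_le_pow_left₀ (abs_nonneg k) hk2 2) (abs_nonneg (discr K))
  linarith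

lemma isCoprime_zsqrtd_star {α : ℤ√d} (h : IsCoprime (2 * α.re) α.norm) :
    IsCoprime α (star α) := by
  obtain ⟨u, v, huv⟩ := h
  refine ⟨u + v * star α, u, ?_⟩
  have hadd : α + star α = (2 * α.re : ℤ) := by ext <;> simp [two_mul]
  have hcast := congr_arg (Int.cast : ℤ → ℤ√d) huv
  rw [Int.cast_add, Int.cast_mul u, Int.cast_mul v, ← hadd, Zsqrtd.norm_eq_mul_conj,
    Int.cast_one] at hcast
  linear_combination hcast

theorem exists_injective_zmod_prod_classGroup_of_zsqrtd {n : ℕ} (hn : Odd n)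
    (hK : Module.finrank ℚ K = 2) (hd : d < -4) (hsf : Squarefree d) (h : ∃ x : K, x * x = d)
    {α β : ℤ√d} {r s : ℤ} (hα : α.norm = r ^ n) (hβ : β.norm = s ^ n)
    (hαr : IsCoprime (2 * α.re) r) (hβs : IsCoprime (2 * β.re) s)
    (hαβ : ∀ i < n, ∀ j < n, (∃ γ : ℤ√d, 2 ^ n * (α ^ i * β ^ j) = γ ^ n) → i = 0 ∧ j = 0) :
    ∃ f : Multiplicative (ZMod n × ZMod n) →* ClassGroup (𝓞 K), Function.Injective f := by
  have : NeZero n := ⟨hn.pos.ne'⟩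
  have hd' : ¬IsSquare d := mt IsSquare.nonneg (by linarith)
  have hd'' (m : ℤ) : d ≠ m * m := fun hm ↦ hd' ⟨m, hm⟩
  obtain ⟨D, hD⟩ := exists_integer_mul_self_eq h
  let ι : ℤ√d →+* 𝓞 K := Zsqrtd.lift ⟨D, hD⟩
  have hι : Function.Injective ι := Zsqrtd.lift_injective _ hd''
  have ne_zero {γ : ℤ√d} {t : ℤ} (hγ : γ.norm = t ^ n) (hγt : IsCoprime (2 * γ.re) t) :
      ι γ ≠ 0 := by
    rw [map_ne_zero_iff ι hι]
    rintro rfl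
    obtain rfl : t = 0 := pow_eq_zero_iff (NeZero.ne n) |>.1 (by simpa using hγ.symm)
    exact not_isCoprime_zero_zero (by simpa using hγt)
  have coprime {γ : ℤ√d} {t : ℤ} (hγ : γ.norm = t ^ n) (hγt : IsCoprime (2 * γ.re) t) :
      IsCoprime (ι γ) (ι (star γ)) :=
    (isCoprime_zsqrtd_star (hγ ▸ hγt.pow_right)).map ι
  have mul_star {γ : ℤ√d} {t : ℤ} (hγ : γ.norm = t ^ n) : ι γ * ι (star γ) = t ^ n := by
    rw [← map_mul, ← Zsqrtd.norm_eq_mul_conj, hγ, map_intCast, Int.cast_pow]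
  refine exists_injective_zmod_prod_classGroup (fun u ↦ ?_) (ne_zero hα hαr) (ne_zero hβ hβs)
    (coprime hα hαr) (coprime hβ hβs) (mul_star hα) (mul_star hβ) fun i hi j hj ⟨c, hc⟩ ↦ ?_
  · rcases units_eq_one_or_neg_one hK hd hsf h u with rfl | rfl
    · exact ⟨1, by simp⟩
    · exact ⟨-1, by simp [hn.neg_one_pow]⟩
  · rw [← map_pow, ← map_pow, ← map_mul] at hc
    exact hαβ i hi j hj
      (exists_two_pow_mul_eq_pow_of_zsqrtd_lift_eq_pow hK hd' hsf ⟨D, hD⟩ hc)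

end QuadraticNumberField

lemma exists_quadratic_numberField {d : ℤ} (hd : ¬IsSquare d) :
    ∃ (K : Type) (_ : Field K) (_ : NumberField K),
      (∃ x : K, x * x = d) ∧ Module.finrank ℚ K = 2 := by
  have : Fact (∀ r : ℚ, r ^ 2 ≠ d + 0 * r) :=
    ⟨fun r hr ↦ hd (Rat.isSquare_intCast_iff.1 ⟨r, by linear_combination -hr⟩)⟩
  refine ⟨QuadraticAlgebra ℚ d 0, inferInstance, ⟨⟩, ⟨QuadraticAlgebra.omega, ?_⟩,
    QuadraticAlgebra.finrank_eq_two _ _⟩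
  ext <;> simp

section Forms

/-- The quartic factor of `sexticForm`. -/
def quarticForm (S T : ℤ) : ℤ :=
  T ^ 4 + 5034 * S * T ^ 3 + 5162 * 4608 * S ^ 2 * T ^ 2 + 5034 * 2304 ^ 2 * S ^ 3 * T +
    2304 ^ 4 * S ^ 4

/-- The homogenization of the quintic `F` with `F(t) = sexticForm 1 t`, for which the group of
rational points on the Jacobian of the genus 2 curve `y² = F(t)` contains `(ℤ/5ℤ)²`. The quadratic
fields to be counted are obtained by adjoining the square roots of its values. -/
def sexticForm (S T : ℤ) : ℤ := -6 * S * T * quarticForm S T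

/-- The quartic factor of `reForm₁`. -/
def reQuartic₁ (S T : ℤ) : ℤ :=
  T ^ 4 - 136716 * S * T ^ 3 - 100629504 * S ^ 2 * T ^ 2 - 136716 * 2304 ^ 2 * S ^ 3 * T +
    2304 ^ 4 * S ^ 4

/-- The rational part of `f₁ = reForm₁ 1 t + imForm₁ 1 t * y`, a function on the curve
`y² = sexticForm 1 t` with norm `normForm₁ 1 t ^ 5`; its divisor is five times a divisor
representing a 5-torsion class. -/
def reForm₁ (S T : ℤ) : ℤ := (T - 2304 * S) * reQuartic₁ S T

/-- The coefficient of `y` in the function `f₁` of `reForm₁`. -/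
def imForm₁ (S T : ℤ) : ℤ := 250 * (T ^ 2 - 31 * 768 * S * T + 2304 ^ 2 * S ^ 2)

/-- The quadratic form whose fifth power is the norm of the function `f₁` of `reForm₁`. -/
def normForm₁ (S T : ℤ) : ℤ := T ^ 2 + 101 * 192 * S * T + 2304 ^ 2 * S ^ 2

/-- The quartic factor of `reForm₂`. -/
def reQuartic₂ (S T : ℤ) : ℤ :=
  T ^ 4 - 268716 * S * T ^ 3 + 81902 * 27648 * S ^ 2 * T ^ 2 - 268716 * 2304 ^ 2 * S ^ 3 * T +
    2304 ^ 4 * S ^ 4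

/-- The rational part of `f₂ = reForm₂ 1 t + imForm₂ 1 t * y`, a function on the curve
`y² = sexticForm 1 t` with norm `normForm₂ 1 t ^ 5`, giving a second, independent 5-torsion
class. -/
def reForm₂ (S T : ℤ) : ℤ := (T + 2304 * S) * reQuartic₂ S T

/-- The coefficient of `y` in the function `f₂` of `reForm₂`. -/
def imForm₂ (S T : ℤ) : ℤ := 114 * (3 * T ^ 2 - 554 * 256 * S * T + 3 * 2304 ^ 2 * S ^ 2)

/-- The quadratic form whose fifth power is the norm of the function `f₂` of `reForm₂`. -/
def normForm₂ (S T : ℤ) : ℤ := T ^ 2 + 44 * 768 * S * T + 2304 ^ 2 * S ^ 2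

lemma reForm₁_sq_sub (S T : ℤ) :
    reForm₁ S T ^ 2 - sexticForm S T * imForm₁ S T ^ 2 = normForm₁ S T ^ 5 := by
  simp only [reForm₁, reQuartic₁, sexticForm, quarticForm, imForm₁, normForm₁]
  ring

lemma reForm₂_sq_sub (S T : ℤ) :
    reForm₂ S T ^ 2 - sexticForm S T * imForm₂ S T ^ 2 = normForm₂ S T ^ 5 := by
  simp only [reForm₂, reQuartic₂, sexticForm, quarticForm, imForm₂, normForm₂]
  ring

/-- The value of the function `f₁` of `reForm₁` at `t = T / S`, cleared of denominators, when
`d * m ^ 2 = sexticForm S T`, so that `√(sexticForm S T) = m * √d`. -/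
def zsqrtdElt₁ {d : ℤ} (m S T : ℤ) : ℤ√d := ⟨reForm₁ S T, imForm₁ S T * m⟩

/-- The value of the function `f₂` of `reForm₂` at `t = T / S`, cleared of denominators; see
`zsqrtdElt₁`. -/
def zsqrtdElt₂ {d : ℤ} (m S T : ℤ) : ℤ√d := ⟨reForm₂ S T, imForm₂ S T * m⟩

lemma norm_zsqrtdElt₁ {d m S T : ℤ} (h : d * m ^ 2 = sexticForm S T) :
    (zsqrtdElt₁ m S T : ℤ√d).norm = normForm₁ S T ^ 5 := by
  rw [Zsqrtd.norm_def, ← reForm₁_sq_sub, ← h, zsqrtdElt₁]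
  ring

lemma norm_zsqrtdElt₂ {d m S T : ℤ} (h : d * m ^ 2 = sexticForm S T) :
    (zsqrtdElt₂ m S T : ℤ√d).norm = normForm₂ S T ^ 5 := by
  rw [Zsqrtd.norm_def, ← reForm₂_sq_sub, ← h, zsqrtdElt₂]
  ring

end Forms

section Coprimality

lemma isCoprime_of_modEq {a b n : ℤ} (h : a ≡ b [ZMOD n]) (hb : IsCoprime b n) :
    IsCoprime a n := by
  obtain ⟨k, hk⟩ := h.symm.dvd
  rw [eq_add_of_sub_eq' hk]
  exact hb.add_mul_left_left k

lemma isCoprime_of_eq_mul_mul_add_sq {R : Type*} [CommRing R] {n c s t δ : R}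
    (h : n = c * s * t + δ ^ 2) (hc : IsCoprime δ c) (hs : IsCoprime δ s) (ht : IsCoprime δ t) :
    IsCoprime n c ∧ IsCoprime n δ := by
  subst h
  constructor
  · rw [mul_assoc]
    exact hc.pow_left.mul_add_left_left _
  · rw [sq]
    exact ((hc.mul_right hs).mul_right ht).symm.add_mul_left_left _

lemma isCoprime_of_mul_eq_mul_pow_add_mul {R : Type*} [CommRing R] {n μ P e δ r : R} {k : ℕ}
    (h : μ * P = e * δ ^ k + n * r) (he : IsCoprime n e) (hδ : IsCoprime n δ) :
    IsCoprime n P := by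
  refine IsCoprime.of_mul_right_right (y := μ) ?_
  rw [h]
  exact (he.mul_right hδ.pow_right).add_mul_left_right _

variable {S T : ℤ}

lemma isCoprime_add_mul_left {u : ℤ} (hST : IsCoprime S T) : IsCoprime (T + u * S) S :=
  hST.symm.add_mul_right_left u

lemma isCoprime_add_mul_right {u : ℤ} (hST : IsCoprime S T) (hu : IsCoprime u T) :
    IsCoprime (T + u * S) T := by
  simpa [add_comm] using (hu.mul_left hST).add_mul_left_left 1

lemma isCoprime_add_mul_of_modEq {u M : ℤ} (h : S ≡ T [ZMOD M]) (hT : IsCoprime T M)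
    (hu : IsCoprime (1 + u) M) : IsCoprime (T + u * S) M := by
  refine isCoprime_of_modEq (b := (1 + u) * T) ?_ (hu.mul_left hT)
  calc T + u * S ≡ T + u * T [ZMOD M] := by gcongr
    _ = (1 + u) * T := by ring

-- With `δ = T - 2304 * S`, the norm form is `c * S * T + δ ^ 2` for a constant `c`, and modulo the
-- norm form `16 * reQuartic₁` is `3 ^ 4 * δ ^ 4`. Hence only the primes dividing `c` or `3` matter.
lemma isCoprime_two_mul_reForm₁ (hST : IsCoprime S T) (hmod : S ≡ T [ZMOD 30])
    (hT : IsCoprime T 30) : IsCoprime (2 * reForm₁ S T) (normForm₁ S T) := by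
  have hu : IsCoprime (-2304) T :=
    ((hT.pow_right (n := 8)).of_isCoprime_of_dvd_right (by norm_num)).symm
  have hδ : IsCoprime (T + -2304 * S) (2 ^ 6 * 3 * 5 ^ 3) :=
    ((isCoprime_add_mul_of_modEq hmod hT (by norm_num)).pow_right
      (n := 6)).of_isCoprime_of_dvd_right (by norm_num)
  obtain ⟨hc, hδN⟩ := isCoprime_of_eq_mul_mul_add_sq (n := normForm₁ S T)
    (by simp only [normForm₁]; ring) hδ (isCoprime_add_mul_left hST)
    (isCoprime_add_mul_right hST hu)
  have hP : IsCoprime (normForm₁ S T) (reQuartic₁ S T) := by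
    refine isCoprime_of_mul_eq_mul_pow_add_mul (μ := 16) (e := 3 ^ 4) (k := 4)
      (r := -45 * (T + -2304 * S) ^ 2 - 20 * normForm₁ S T) ?_ ?_ hδN
    · simp only [reQuartic₁, normForm₁]
      ring
    · exact (hc.of_isCoprime_of_dvd_right (by norm_num : (3 : ℤ) ∣ _)).pow_right
  have h2 := hc.of_isCoprime_of_dvd_right (by norm_num : (2 : ℤ) ∣ _)
  rw [reForm₁, sub_eq_add_neg, ← neg_mul]
  exact (h2.mul_right (hδN.mul_right hP)).symm

-- The same argument with `δ = T + 2304 * S` and `128 * reQuartic₂ ≡ 3 * 5 ^ 4 * δ ^ 4`; as `5` does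
-- not divide `c`, coprimality of the norm form to `5` is checked at `S = T`.
lemma isCoprime_two_mul_reForm₂ (hST : IsCoprime S T) (hmod : S ≡ T [ZMOD 570])
    (hT : IsCoprime T 570) : IsCoprime (2 * reForm₂ S T) (normForm₂ S T) := by
  have hu : IsCoprime 2304 T :=
    ((hT.pow_right (n := 8)).of_isCoprime_of_dvd_right (by norm_num)).symm
  have hδ : IsCoprime (T + 2304 * S) (2 ^ 9 * 3 * 19) :=
    ((isCoprime_add_mul_of_modEq (M := 114) (hmod.of_dvd (by norm_num))
      (hT.of_isCoprime_of_dvd_right (by norm_num)) (by norm_num)).pow_right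
        (n := 9)).of_isCoprime_of_dvd_right (by norm_num)
  obtain ⟨hc, hδN⟩ := isCoprime_of_eq_mul_mul_add_sq (n := normForm₂ S T)
    (by simp only [normForm₂]; ring) hδ (isCoprime_add_mul_left hST)
    (isCoprime_add_mul_right hST hu)
  have h5 : IsCoprime (normForm₂ S T) 5 := by
    have hT5 : IsCoprime T 5 := hT.of_isCoprime_of_dvd_right (by norm_num)
    have hmod5 : S ≡ T [ZMOD 5] := hmod.of_dvd (by norm_num)
    refine isCoprime_of_modEq (b := normForm₂ 1 1 * T ^ 2) ?_
      (IsCoprime.mul_left (by norm_num [normForm₂]) hT5.pow_left)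
    calc normForm₂ S T ≡ normForm₂ T T [ZMOD 5] := by unfold normForm₂; gcongr
      _ = normForm₂ 1 1 * T ^ 2 := by simp only [normForm₂]; ring
  have hP : IsCoprime (normForm₂ S T) (reQuartic₂ S T) := by
    refine isCoprime_of_mul_eq_mul_pow_add_mul (μ := 128) (e := 3 * 5 ^ 4) (k := 4)
      (r := -2275 * (T + 2304 * S) ^ 2 + 528 * normForm₂ S T) ?_ ?_ hδN
    · simp only [reQuartic₂, normForm₂]
      ring
    · exact (hc.of_isCoprime_of_dvd_right (by norm_num : (3 : ℤ) ∣ _)).mul_right h5.pow_right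
  have h2 := hc.of_isCoprime_of_dvd_right (by norm_num : (2 : ℤ) ∣ _)
  exact (h2.mul_right (hδN.mul_right hP)).symm

end Coprimality

section Residues

lemma dvd_of_two_pow_mul_eq_pow {F R : Type*} [Field F] [Fintype F] [CommRing R] (h2 : (2 : F) ≠ 0)
    {n k : ℕ} (hk : n * k = Fintype.card F - 1) {ζ : F} (hζ : IsPrimitiveRoot ζ n)
    {A B t : F} {a b : ℕ} (hA : A ^ k = ζ ^ a) (hB : B ^ k = ζ ^ b) (ht : t ≠ 0)
    (φ : R →+* F) {α β γ : R} (hα : φ α = t ^ n * A) (hβ : φ β = t ^ n * B) {i j : ℕ}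
    (h : 2 ^ n * (α ^ i * β ^ j) = γ ^ n) : n ∣ a * i + b * j := by
  have hcard : 0 < n * k := by rw [hk]; exact Nat.sub_pos_of_lt Fintype.one_lt_card
  have pow_nk {x : F} (hx : x ≠ 0) : x ^ (n * k) = 1 := by
    rw [hk, FiniteField.pow_card_sub_one_eq_one x hx]
  have key : (2 ^ n * ((t ^ n * A) ^ i * (t ^ n * B) ^ j)) ^ k = φ γ ^ (n * k) := by
    rw [← hα, ← hβ, pow_mul, ← map_pow φ γ, ← h]
    simp only [map_mul, map_pow, map_ofNat]
  have hleft : (2 ^ n * ((t ^ n * A) ^ i * (t ^ n * B) ^ j)) ^ k = ζ ^ (a * i + b * j) := by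
    calc _ = 2 ^ (n * k) * (t ^ (n * k)) ^ (i + j) * ((A ^ k) ^ i * (B ^ k) ^ j) := by ring
      _ = ζ ^ (a * i + b * j) := by
        rw [pow_nk h2, pow_nk ht, hA, hB, one_pow, one_mul, one_mul, ← pow_mul, ← pow_mul, pow_add]
  have hζ0 : ζ ≠ 0 := hζ.ne_zero (pos_of_mul_pos_left hcard (Nat.zero_le _)).ne'
  rw [hleft] at key
  have hγ : φ γ ≠ 0 := by
    intro h0
    rw [h0, zero_pow hcard.ne'] at key
    exact pow_ne_zero _ hζ0 key
  rw [pow_nk hγ] at key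
  exact hζ.dvd_of_pow_eq_one _ key

section Cast

variable {R : Type*} [CommRing R] {S T : ℤ} (h : (S : R) = T)
include h

lemma cast_sexticForm_of_cast_eq : (sexticForm S T : R) = T ^ 6 * sexticForm 1 1 := by
  simp only [sexticForm, quarticForm]
  push_cast [h]
  ring

lemma cast_reForm₁_of_cast_eq : (reForm₁ S T : R) = T ^ 5 * reForm₁ 1 1 := by
  simp only [reForm₁, reQuartic₁]
  push_cast [h]
  ring

lemma cast_imForm₁_of_cast_eq : (imForm₁ S T : R) = T ^ 2 * imForm₁ 1 1 := by
  simp only [imForm₁]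
  push_cast [h]
  ring

lemma cast_reForm₂_of_cast_eq : (reForm₂ S T : R) = T ^ 5 * reForm₂ 1 1 := by
  simp only [reForm₂, reQuartic₂]
  push_cast [h]
  ring

lemma cast_imForm₂_of_cast_eq : (imForm₂ S T : R) = T ^ 2 * imForm₂ 1 1 := by
  simp only [imForm₂]
  push_cast [h]
  ring

end Cast

variable {d m S T : ℤ}

lemma exists_ringHom_zsqrtd {F : Type*} [Field F] (hd : d * m ^ 2 = sexticForm S T)
    (hST : (S : F) = T) (hT : (T : F) ≠ 0) {w : F} (hw : w * w = sexticForm 1 1) (hw0 : w ≠ 0) :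
    ∃ φ : ℤ√d →+* F, ∀ x y : ℤ, φ ⟨x, y * m⟩ = x + y * (T ^ 3 * w) := by
  have hdm : (d : F) * (m : F) ^ 2 = T ^ 6 * (w * w) := by
    rw [hw, ← cast_sexticForm_of_cast_eq hST, ← hd]
    push_cast
    rfl
  have hm : (m : F) ≠ 0 := by
    intro h0
    rw [h0, zero_pow two_ne_zero, mul_zero] at hdm
    exact mul_ne_zero (pow_ne_zero 6 hT) (mul_ne_zero hw0 hw0) hdm.symm
  have hρ : (T ^ 3 * w / m) * (T ^ 3 * w / m) = (d : F) := by
    rw [div_mul_div_comm, div_eq_iff (mul_ne_zero hm hm)]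
    linear_combination -hdm
  refine ⟨Zsqrtd.lift ⟨T ^ 3 * w / m, hρ⟩, fun x y ↦ ?_⟩
  rw [Zsqrtd.lift_apply_apply]
  push_cast
  field_simp

lemma five_dvd_of_two_pow_mul_eq_pow {q : ℕ} (hq : q.Prime) (h2 : (2 : ZMod q) ≠ 0) {k : ℕ}
    (hk : 5 * k = q - 1) {ζ : ZMod q} (hζ : ζ ^ 5 = 1) (hζ1 : ζ ≠ 1)
    {w : ZMod q} (hw : w * w = sexticForm 1 1) (hw0 : w ≠ 0) {a b : ℕ}
    (ha : (reForm₁ 1 1 + imForm₁ 1 1 * w) ^ k = ζ ^ a)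
    (hb : (reForm₂ 1 1 + imForm₂ 1 1 * w) ^ k = ζ ^ b)
    (hd : d * m ^ 2 = sexticForm S T) (hST : S ≡ T [ZMOD q]) (hT : IsCoprime T q) {i j : ℕ}
    {γ : ℤ√d} (h : 2 ^ 5 * (zsqrtdElt₁ m S T ^ i * zsqrtdElt₂ m S T ^ j) = γ ^ 5) :
    5 ∣ a * i + b * j := by
  have : Fact q.Prime := ⟨hq⟩
  have hST' : (S : ZMod q) = T := (ZMod.intCast_eq_intCast_iff S T q).2 hST
  have hT' : (T : ZMod q) ≠ 0 := ((ZMod.coe_int_isUnit_iff_isCoprime T q).2 hT.symm).ne_zero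
  obtain ⟨φ, hφ⟩ := exists_ringHom_zsqrtd hd hST' hT' hw hw0
  have : Fact (Nat.Prime 5) := ⟨Nat.prime_five⟩
  have hprim : IsPrimitiveRoot ζ 5 := IsPrimitiveRoot.iff_orderOf.2 (orderOf_eq_prime hζ hζ1)
  refine dvd_of_two_pow_mul_eq_pow h2 (by rw [hk, ZMod.card]) hprim ha hb hT' φ ?_ ?_ h
  · rw [zsqrtdElt₁, hφ, cast_reForm₁_of_cast_eq hST', cast_imForm₁_of_cast_eq hST']
    ring
  · rw [zsqrtdElt₂, hφ, cast_reForm₂_of_cast_eq hST', cast_imForm₂_of_cast_eq hST']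
    ring

set_option maxRecDepth 100000 in
lemma eq_zero_of_two_pow_mul_eq_pow (hd : d * m ^ 2 = sexticForm S T)
    (hmod : S ≡ T [ZMOD 31 * 131]) (hT : IsCoprime T (31 * 131)) {i j : ℕ} (hi : i < 5) (hj : j < 5)
    {γ : ℤ√d} (h : 2 ^ 5 * (zsqrtdElt₁ m S T ^ i * zsqrtdElt₂ m S T ^ j) = γ ^ 5) :
    i = 0 ∧ j = 0 := by
  have h31 : 5 ∣ 1 * i + 1 * j :=
    five_dvd_of_two_pow_mul_eq_pow (q := 31) (by norm_num) (ζ := 8) (w := 5) (k := 6)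
      (by decide) rfl (by decide) (by decide) (by decide) (by decide) (by decide) (by decide) hd
      (hmod.of_dvd (by norm_num)) hT.of_mul_right_left h
  have h131 : 5 ∣ 4 * i + 1 * j :=
    five_dvd_of_two_pow_mul_eq_pow (q := 131) (by norm_num) (ζ := 58) (w := 61) (k := 26)
      (by decide) rfl (by decide) (by decide) (by decide) (by decide) (by decide) (by decide) hd
      (hmod.of_dvd (by norm_num)) hT.of_mul_right_right h
  omega

end Residues

section SquarefreePart

lemma exists_squarefree_mul_sq_eq {n : ℤ} (hn : n ≠ 0) :
    ∃ d m : ℤ, Squarefree d ∧ d * m ^ 2 = n := by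
  obtain ⟨a, b, -, -, hab, ha⟩ := Nat.sq_mul_squarefree_of_pos (Int.natAbs_pos.2 hn)
  refine ⟨n.sign * a, b, ?_, ?_⟩
  · rw [← Int.squarefree_natAbs, Int.natAbs_mul, Int.natAbs_sign_of_ne_zero hn, one_mul]
    exact ha
  · have hab' : (b : ℤ) ^ 2 * a = n.natAbs := by exact_mod_cast hab
    rw [mul_assoc, mul_comm (a : ℤ), hab', Int.sign_mul_natAbs]

lemma dvd_of_mul_sq_eq_mul {R : Type*} [CommMonoidWithZero R] [IsCancelMulZero R] {p x d m : R}
    (hp : Prime p) (hx : ¬p ∣ x) (h : d * m ^ 2 = p * x) : p ∣ d := by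
  refine (hp.dvd_or_dvd (Dvd.intro x h.symm)).resolve_right fun hm ↦ hx ?_
  obtain ⟨k, rfl⟩ := hp.dvd_of_dvd_pow hm
  exact ⟨d * k ^ 2, mul_left_cancel₀ hp.ne_zero (by rw [← h, mul_pow, sq p]; ac_rfl)⟩

lemma isCoprime_quarticForm_left {S T : ℤ} (h : IsCoprime S T) : IsCoprime S (quarticForm S T) := by
  have hQ : quarticForm S T = T ^ 4 + S * (5034 * T ^ 3 + 5162 * 4608 * S * T ^ 2 +
      5034 * 2304 ^ 2 * S ^ 2 * T + 2304 ^ 4 * S ^ 3) := by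
    rw [quarticForm]; ring
  rw [hQ]
  exact h.pow_right.add_mul_left_right _

lemma isCoprime_quarticForm_right {S T : ℤ} (h : IsCoprime T S) (hT : IsCoprime T 2304) :
    IsCoprime T (quarticForm S T) := by
  have hQ : quarticForm S T = 2304 ^ 4 * S ^ 4 + T * (T ^ 3 + 5034 * S * T ^ 2 +
      5162 * 4608 * S ^ 2 * T + 5034 * 2304 ^ 2 * S ^ 3) := by
    rw [quarticForm]; ring
  rw [hQ]
  exact (hT.pow_right.mul_right h.pow_right).add_mul_left_right _

lemma left_dvd_of_mul_sq_eq_sexticForm {S T d m : ℤ} (hS : Prime S) (h6 : IsCoprime S 6)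
    (hST : IsCoprime S T) (h : d * m ^ 2 = sexticForm S T) : S ∣ d := by
  have hcop : IsCoprime S (-6 * T * quarticForm S T) :=
    (h6.neg_right.mul_right hST).mul_right (isCoprime_quarticForm_left hST)
  refine dvd_of_mul_sq_eq_mul (m := m) hS (fun hdvd ↦ hS.not_isUnit (hcop.isUnit_of_dvd hdvd)) ?_
  rw [h, sexticForm]
  ring

lemma right_dvd_of_mul_sq_eq_sexticForm {S T d m : ℤ} (hT : Prime T) (h6 : IsCoprime T 6)
    (hST : IsCoprime S T) (h : d * m ^ 2 = sexticForm S T) : T ∣ d := by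
  have h2304 : IsCoprime T 2304 :=
    (h6.pow_right (n := 8)).of_isCoprime_of_dvd_right (by norm_num)
  have hcop : IsCoprime T (-6 * S * quarticForm S T) :=
    (h6.neg_right.mul_right hST.symm).mul_right (isCoprime_quarticForm_right hST.symm h2304)
  refine dvd_of_mul_sq_eq_mul (m := m) hT (fun hdvd ↦ hT.not_isUnit (hcop.isUnit_of_dvd hdvd)) ?_
  rw [h, sexticForm]
  ring

lemma sexticForm_neg {S T : ℤ} (hS : 0 < S) (hT : 0 < T) : sexticForm S T < 0 := by
  have hQ : 0 < quarticForm S T := by unfold quarticForm; positivity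
  rw [sexticForm, neg_mul, neg_mul, neg_mul, neg_lt_zero]
  positivity

/-- The length of `sexticForm`, that is, the sum of the absolute values of its coefficients; it
bounds the values of the form. -/
def sexticLength : ℕ := 6 * (1 + 5034 + 5162 * 4608 + 5034 * 2304 ^ 2 + 2304 ^ 4)

lemma abs_sexticForm_le {S T n : ℤ} (hS : 0 ≤ S) (hT : 0 ≤ T) (hSn : S ≤ n) (hTn : T ≤ n) :
    |sexticForm S T| ≤ sexticLength * n ^ 6 := by
  have hn : 0 ≤ n := hS.trans hSn
  have hQ : quarticForm S T ≤ quarticForm n n := by unfold quarticForm; gcongr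
  have hQ0 : 0 ≤ quarticForm S T := by unfold quarticForm; positivity
  calc |sexticForm S T| = 6 * S * T * quarticForm S T := by
        rw [sexticForm, neg_mul, neg_mul, neg_mul, abs_neg, abs_of_nonneg (by positivity)]
    _ ≤ 6 * n * n * quarticForm n n := by gcongr
    _ = sexticLength * n ^ 6 := by simp only [quarticForm, sexticLength]; push_cast; ring

end SquarefreePart

section ClassGroup

/-- The modulus of the congruence imposed on `S` and `T`. The primes `2`, `3`, `5` and `19` are
those where `zsqrtdElt₁` and `zsqrtdElt₂` could fail to be coprime to their conjugates; the fifth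
power residue characters at `31` and `131` show that the two elements are independent modulo fifth
powers. -/
def rankModulus : ℕ := 2 * 3 * 5 * 19 * 31 * 131

lemma goodRank5sq_of_mul_sq_eq_sexticForm {S T d m : ℤ} {X : ℝ} (hd : d < -4)
    (hsf : Squarefree d) (h : d * m ^ 2 = sexticForm S T) (hST : IsCoprime S T)
    (hmod : S ≡ T [ZMOD rankModulus]) (hT : IsCoprime T rankModulus) (hX : 4 * |(d : ℝ)| ≤ X) :
    GoodRank5sq X d := by
  refine ⟨by lia, hsf, fun K _ _ hx hK ↦ ⟨?_, ?_⟩⟩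
  · have hsq : ¬IsSquare d := mt IsSquare.nonneg (by lia)
    exact le_trans (by exact_mod_cast abs_discr_le_four_mul_abs hK hsq hx) hX
  · have hdvd {a : ℤ} (ha : a ∣ rankModulus) : S ≡ T [ZMOD a] ∧ IsCoprime T a :=
      ⟨hmod.of_dvd ha, hT.of_isCoprime_of_dvd_right ha⟩
    obtain ⟨hmod₁, hT₁⟩ := hdvd (a := 30) (by norm_num [rankModulus])
    obtain ⟨hmod₂, hT₂⟩ := hdvd (a := 570) (by norm_num [rankModulus])
    obtain ⟨hmod₃, hT₃⟩ := hdvd (a := 31 * 131) (by norm_num [rankModulus])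
    exact exists_injective_zmod_prod_classGroup_of_zsqrtd (by decide) hK hd hsf hx
      (norm_zsqrtdElt₁ h) (norm_zsqrtdElt₂ h) (isCoprime_two_mul_reForm₁ hST hmod₁ hT₁)
      (isCoprime_two_mul_reForm₂ hST hmod₂ hT₂) fun i hi j hj ⟨γ, hγ⟩ ↦
        eq_zero_of_two_pow_mul_eq_pow h hmod₃ hT₃ hi hj hγ

lemma exists_goodRank5sq {S T n : ℕ} {X : ℝ} (hS : S.Prime) (hT : T.Prime) (hne : S ≠ T)
    (hmod : S ≡ T [MOD rankModulus]) (hTM : T.Coprime rankModulus) (hSn : S ≤ n) (hTn : T ≤ n)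
    (hX : 4 * sexticLength * (n : ℝ) ^ 6 ≤ X) :
    ∃ d : ℤ, GoodRank5sq X d ∧ S ∣ d.natAbs ∧ T ∣ d.natAbs ∧
      d.natAbs ≤ sexticLength * n ^ 6 := by
  have hneg : sexticForm S T < 0 :=
    sexticForm_neg (by exact_mod_cast hS.pos) (by exact_mod_cast hT.pos)
  obtain ⟨d, m, hsf, h⟩ := exists_squarefree_mul_sq_eq hneg.ne
  have hmod' : (S : ℤ) ≡ T [ZMOD rankModulus] := by exact_mod_cast hmod
  have hTM' : IsCoprime (T : ℤ) rankModulus := Nat.isCoprime_iff_coprime.2 hTM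
  have hST : IsCoprime (S : ℤ) T := Nat.isCoprime_iff_coprime.2 ((Nat.coprime_primes hS hT).2 hne)
  have h6 : (6 : ℤ) ∣ rankModulus := by norm_num [rankModulus]
  have hS6 : IsCoprime (S : ℤ) 6 :=
    (isCoprime_of_modEq hmod' hTM').of_isCoprime_of_dvd_right h6
  have hSd : (S : ℤ) ∣ d :=
    left_dvd_of_mul_sq_eq_sexticForm (Nat.prime_iff_prime_int.1 hS) hS6 hST h
  have hTd : (T : ℤ) ∣ d := right_dvd_of_mul_sq_eq_sexticForm (Nat.prime_iff_prime_int.1 hT)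
    (hTM'.of_isCoprime_of_dvd_right h6) hST h
  have hd0 : d < 0 := neg_of_mul_neg_left (h ▸ hneg) (sq_nonneg m)
  have hS5 : 5 ≤ S := by
    refine hS.five_le_of_ne_two_of_ne_three ?_ ?_ <;> rintro rfl <;> revert hS6 <;> norm_num
  have hd : d < -4 := by
    have := Int.le_of_dvd (by lia) ((dvd_neg (b := d)).2 hSd)
    lia
  have habs : |d| ≤ sexticLength * (n : ℤ) ^ 6 :=
    (Int.le_of_dvd (abs_pos.2 hneg.ne) ((abs_dvd_abs _ _).2 (Dvd.intro _ h))).trans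
      (abs_sexticForm_le (by lia) (by lia) (by exact_mod_cast hSn) (by exact_mod_cast hTn))
  refine ⟨d, goodRank5sq_of_mul_sq_eq_sexticForm hd hsf h hST hmod' hTM' (le_trans ?_ hX),
    Int.natCast_dvd.1 hSd, Int.natCast_dvd.1 hTd, by zify; exact habs⟩
  exact_mod_cast (by linarith : 4 * |d| ≤ 4 * sexticLength * (n : ℤ) ^ 6)

lemma finite_setOf_goodRank5sq (X : ℝ) : {d : ℤ | GoodRank5sq X d}.Finite := by
  refine (Set.finite_Icc (-⌊X⌋) ⌊X⌋).subset fun d ⟨hd, hsf, h⟩ ↦ abs_le.1 (Int.le_floor.2 ?_)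
  have hsq : ¬IsSquare d := mt IsSquare.nonneg hd.not_ge
  obtain ⟨K, _, _, hx, hK⟩ := exists_quadratic_numberField hsq
  exact le_trans (by exact_mod_cast abs_le_abs_discr hK hsq hsf hx) (h K hx hK).1

end ClassGroup

section Counting

open Finset

lemma card_mul_card_sub_card_le {ι κ : Type*} {P : Finset ι} {G : Set κ} {b : ℕ} (hG : G.Finite)
    (r : ι → κ → Prop) [DecidableRel r] (h : ∀ x ∈ P, ∀ y ∈ P, x ≠ y →
      ∃ d ∈ G, r x d ∧ r y d ∧ #{p ∈ P | r p d} ≤ b) :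
    #P * #P - #P ≤ b ^ 2 * G.ncard := by
  classical
  have hpair : ∀ z : P.offDiag, ∃ d ∈ G, r z.1.1 d ∧ r z.1.2 d ∧ #{p ∈ P | r p d} ≤ b := by
    rintro ⟨z, hz⟩
    obtain ⟨hx, hy, hxy⟩ := mem_offDiag.1 hz
    exact h _ hx _ hy hxy
  choose g hgG hg₁ hg₂ hgb using hpair
  have hfib : ∀ d ∈ univ.image g, #{z | g z = d} ≤ b ^ 2 := by
    simp only [mem_image, mem_univ, true_and, forall_exists_index, forall_apply_eq_imp_iff]
    intro z
    have hmaps : Set.MapsTo Subtype.val {w | g w = g z}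
        ({p ∈ P | r p (g z)} ×ˢ {p ∈ P | r p (g z)} : Finset (ι × ι)) := by
      intro w hw
      have hwP := mem_offDiag.1 w.2
      have hwz : g w = g z := hw
      simpa [← hwz] using ⟨⟨hwP.1, hg₁ w⟩, hwP.2.1, hg₂ w⟩
    calc #{w | g w = g z} ≤ #({p ∈ P | r p (g z)} ×ˢ {p ∈ P | r p (g z)}) :=
          card_le_card_of_injOn Subtype.val (by simpa using hmaps) Subtype.val_injective.injOn
      _ ≤ b ^ 2 := by rw [card_product, sq]; gcongr <;> exact hgb z
  calc #P * #P - #P = #(univ : Finset P.offDiag) := by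
        rw [card_univ, Fintype.card_coe, offDiag_card]
    _ ≤ b ^ 2 * #(univ.image g) := card_le_mul_card_image _ _ hfib
    _ ≤ b ^ 2 * G.ncard := by
        gcongr
        rw [← Set.ncard_coe_finset]
        exact Set.ncard_le_ncard (by simpa [Set.range_subset_iff] using hgG) hG

lemma exists_subset_forall_modEq (P : Finset ℕ) {M : ℕ} (hM : M ≠ 0) :
    ∃ Q ⊆ P, (#P / M : ℝ) ≤ #Q ∧ ∀ x ∈ Q, ∀ y ∈ Q, x ≡ y [MOD M] := by
  obtain ⟨a, -, ha⟩ := exists_le_card_fiber_of_nsmul_le_card_of_maps_to (s := P)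
    (t := range M) (f := (· % M)) (b := (#P / M : ℝ))
    (fun p _ ↦ mem_range.2 (Nat.mod_lt p (Nat.pos_of_ne_zero hM))) (by simpa)
    (by simp [mul_div_cancel₀, hM])
  refine ⟨{p ∈ P | p % M = a}, filter_subset _ _, ha, fun x hx y hy ↦ ?_⟩
  exact (mem_filter.1 hx).2.trans (mem_filter.1 hy).2.symm

lemma card_div_le_mul_sqrt_ncard_add_one {κ : Type*} {P : Finset ℕ} {G : Set κ} {M b : ℕ}
    (hM : M ≠ 0) (hG : G.Finite) (r : ℕ → κ → Prop) [DecidableRel r]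
    (h : ∀ x ∈ P, ∀ y ∈ P, x ≠ y → x ≡ y [MOD M] →
      ∃ d ∈ G, r x d ∧ r y d ∧ #{p ∈ P | r p d} ≤ b) :
    (#P / M : ℝ) ≤ b * √G.ncard + 1 := by
  obtain ⟨Q, hQP, hQ, hmod⟩ := exists_subset_forall_modEq P hM
  have hcount : #Q * #Q ≤ b ^ 2 * G.ncard + #Q := by
    refine Nat.sub_le_iff_le_add.1 (card_mul_card_sub_card_le hG r fun x hx y hy hxy ↦ ?_)
    obtain ⟨d, hd, hxd, hyd, hb⟩ := h x (hQP hx) y (hQP hy) hxy (hmod x hx y hy)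
    exact ⟨d, hd, hxd, hyd, (card_le_card (filter_subset_filter _ hQP)).trans hb⟩
  have hcount' : (#Q * #Q : ℝ) ≤ b ^ 2 * G.ncard + #Q := by exact_mod_cast hcount
  rcases Q.eq_empty_or_nonempty with rfl | hne
  · exact hQ.trans (by rw [card_empty, Nat.cast_zero]; positivity)
  have hone : (1 : ℝ) ≤ #Q := by exact_mod_cast hne.card_pos
  have hsqrt : (#Q - 1 : ℝ) ≤ √(b ^ 2 * G.ncard) := Real.le_sqrt_of_sq_le (by nlinarith)
  rw [Real.sqrt_mul (sq_nonneg _), Real.sqrt_sq (Nat.cast_nonneg _)] at hsqrt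
  linarith

/-- The primes in the interval `(√n, n]`, from which `S` and `T` are drawn; the lower bound limits
how many of them can divide a given integer. -/
def primesAboveSqrt (n : ℕ) : Finset ℕ := {p ∈ range (n + 1) | p.Prime ∧ n < p ^ 2}

lemma mem_primesAboveSqrt {n p : ℕ} :
    p ∈ primesAboveSqrt n ↔ p ≤ n ∧ p.Prime ∧ n < p ^ 2 := by
  simp [primesAboveSqrt]

lemma primeCounting_le_card_primesAboveSqrt_add_sqrt (n : ℕ) :
    Nat.primeCounting n ≤ #(primesAboveSqrt n) + Nat.sqrt n := by
  have hsub : {p ∈ range (n + 1) | p.Prime} ⊆ primesAboveSqrt n ∪ Icc 1 (Nat.sqrt n) := by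
    intro p hp
    obtain ⟨hpn, hp⟩ := mem_filter.1 hp
    rw [mem_union, mem_primesAboveSqrt, mem_Icc, Nat.le_sqrt']
    have := hp.one_lt
    grind
  rw [Nat.primeCounting, Nat.primeCounting', Nat.count_eq_card_filter_range]
  calc _ ≤ _ := card_le_card hsub
    _ ≤ _ := card_union_le _ _
    _ = _ := by rw [Nat.card_Icc, Nat.add_sub_cancel]

lemma card_filter_dvd_primesAboveSqrt_le {n C k d : ℕ} (hn : C ^ 2 < n) (hd0 : d ≠ 0)
    (hd : d ≤ C * n ^ k) : #{p ∈ primesAboveSqrt n | p ∣ d} ≤ 2 * k := by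
  set W : Finset ℕ := {p ∈ primesAboveSqrt n | p ∣ d}
  have hW {p : ℕ} (hp : p ∈ W) : (p.Prime ∧ n < p ^ 2) ∧ p ∣ d :=
    ⟨(mem_primesAboveSqrt.1 (mem_filter.1 hp).1).2, (mem_filter.1 hp).2⟩
  have hprod : ∏ p ∈ W, p ≤ C * n ^ k := (Nat.le_of_dvd (Nat.pos_of_ne_zero hd0)
    (prod_primes_dvd _ (fun p hp ↦ (hW hp).1.1.prime) fun p hp ↦ (hW hp).2)).trans hd
  have hlt : n ^ #W < n ^ (2 * k + 1) := by
    calc n ^ #W ≤ ∏ p ∈ W, p ^ 2 := by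
          rw [← prod_const]
          exact prod_le_prod' fun p hp ↦ (hW hp).1.2.le
      _ = (∏ p ∈ W, p) ^ 2 := prod_pow _ _ _
      _ ≤ (C * n ^ k) ^ 2 := by gcongr
      _ = C ^ 2 * n ^ (2 * k) := by ring
      _ < n * n ^ (2 * k) := by gcongr; exact pow_pos (by lia) _
      _ = n ^ (2 * k + 1) := (pow_succ' _ _).symm
  exact Nat.lt_succ_iff.1 ((pow_right_mono₀ (by lia : 1 ≤ n)).reflect_lt hlt)

lemma card_primesAboveSqrt_div_rankModulus_le {n : ℕ} {X : ℝ} (hn : sexticLength ^ 2 < n)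
    (hX : 4 * sexticLength * (n : ℝ) ^ 6 ≤ X) :
    (#(primesAboveSqrt n) / rankModulus : ℝ) ≤
      12 * √{d : ℤ | GoodRank5sq X d}.ncard + 1 := by
  refine card_div_le_mul_sqrt_ncard_add_one (b := 12) (by norm_num [rankModulus])
    (finite_setOf_goodRank5sq X) (fun p d ↦ p ∣ d.natAbs) fun S hS T hT hne hmod ↦ ?_
  obtain ⟨hSn, hSp, -⟩ := mem_primesAboveSqrt.1 hS
  obtain ⟨hTn, hTp, hT⟩ := mem_primesAboveSqrt.1 hT
  have hTM : T.Coprime rankModulus := by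
    have hlt : sexticLength < T := lt_of_pow_lt_pow_left₀ 2 (by lia) (hn.trans hT)
    have hle : rankModulus < sexticLength := by norm_num [rankModulus, sexticLength]
    exact Nat.coprime_of_lt_prime (by norm_num [rankModulus]) (hle.trans hlt) hTp
  obtain ⟨d, hd, hSd, hTd, hle⟩ := exists_goodRank5sq hSp hTp hne hmod hTM hSn hTn hX
  exact ⟨d, hd, hSd, hTd, 
    card_filter_dvd_primesAboveSqrt_le hn (Int.natAbs_ne_zero.2 hd.1.ne) hle⟩

end Counting

section Asymptotics

open Filter Asymptotics Finset

lemma eventually_div_log_le_primeCounting_sub (K : ℝ) :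
    ∀ᶠ n : ℕ in atTop, n / (2 * Real.log n) ≤ Nat.primeCounting n - √n - K := by
  have hsucc : (fun x : ℝ ↦ Real.log (x + 1)) =o[atTop] id :=
    (Real.isLittleO_log_id_atTop.comp_tendsto
      (tendsto_atTop_add_const_right _ 1 tendsto_id)).trans_isBigO
        ((isBigO_refl _ _).add (isLittleO_const_id_atTop 1).isBigO)
  have hsqrt : (fun x : ℝ ↦ (√x + K) * Real.log x) =o[atTop] id := by
    have h : (fun x : ℝ ↦ √x + K) =O[atTop] fun x ↦ x ^ (1 / 2 : ℝ) := by
      simp only [Real.sqrt_eq_rpow]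
      exact (isBigO_refl _ _).add (isLittleO_const_left.2 <| .inr <|
        tendsto_norm_atTop_atTop.comp <| tendsto_rpow_atTop <| by norm_num).isBigO
    refine (h.mul_isLittleO (isLittleO_log_rpow_atTop (r := 1 / 2) (by norm_num))).congr' .rfl ?_
    filter_upwards [eventually_ge_atTop 0] with x hx
    rw [← Real.sqrt_eq_rpow, Real.mul_self_sqrt hx, id]
  have hsum := tendsto_natCast_atTop_atTop.eventually
    ((hsucc.add hsqrt).bound (c := 1 / 6) (by norm_num))
  filter_upwards [hsum, eventually_gt_atTop 1] with n hn hn1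
  have hlog : 0 < Real.log n := Real.log_pos (by exact_mod_cast hn1)
  have hbound : Real.log (n + 1) + (√n + K) * Real.log n ≤ 1 / 6 * n := by
    simpa using (le_abs_self _).trans hn
  have hpi := Chebyshev.pi_ge n
  rw [div_le_iff₀ hlog] at hpi
  rw [div_le_iff₀ (by positivity)]
  nlinarith [mul_le_mul_of_nonneg_left Real.log_two_gt_d9.le n.cast_nonneg]

lemma eventually_div_log_le_sqrt_ncard :
    ∀ᶠ n : ℕ in atTop, ∀ X : ℝ, 4 * sexticLength * (n : ℝ) ^ 6 ≤ X →
      n / Real.log n ≤ 24 * rankModulus * √{d : ℤ | GoodRank5sq X d}.ncard := by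
  filter_upwards [eventually_div_log_le_primeCounting_sub rankModulus,
    eventually_gt_atTop (sexticLength ^ 2)] with n hpi hn X hX
  have hcard : (Nat.primeCounting n : ℝ) ≤ #(primesAboveSqrt n) + √n :=
    calc (Nat.primeCounting n : ℝ) ≤ #(primesAboveSqrt n) + Nat.sqrt n := by
          exact_mod_cast primeCounting_le_card_primesAboveSqrt_add_sqrt n
      _ ≤ #(primesAboveSqrt n) + √n := by gcongr; exact Real.nat_sqrt_le_real_sqrt
  have hM : (0 : ℝ) < rankModulus := by norm_num [rankModulus]
  have hrank := card_primesAboveSqrt_div_rankModulus_le hn hX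
  rw [div_le_iff₀ hM] at hrank
  calc n / Real.log n = 2 * (n / (2 * Real.log n)) := by ring
    _ ≤ 24 * rankModulus * √{d : ℤ | GoodRank5sq X d}.ncard := by linarith

lemma eventually_mul_rpow_div_log_le {C a : ℝ} (hC : 1 ≤ C) (ha : 0 < a) (ha1 : a ≤ 1) :
    ∀ᶠ X : ℝ in atTop, (2 * C ^ a)⁻¹ * X ^ a / Real.log X ≤
      ⌊(X / C) ^ a⌋₊ / Real.log ⌊(X / C) ^ a⌋₊ := by
  have htop : Tendsto (fun X : ℝ ↦ (X / C) ^ a) atTop atTop :=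
    (tendsto_rpow_atTop ha).comp (tendsto_id.atTop_div_const (by positivity))
  filter_upwards [htop.eventually_ge_atTop 2, eventually_ge_atTop 1] with X hX hX1
  have hfloor : 2 ≤ ⌊(X / C) ^ a⌋₊ := Nat.le_floor hX
  have hle : (⌊(X / C) ^ a⌋₊ : ℝ) ≤ X :=
    calc (⌊(X / C) ^ a⌋₊ : ℝ) ≤ (X / C) ^ a := Nat.floor_le (by positivity)
      _ ≤ X ^ a := by gcongr; exact div_le_self (by positivity) hC
      _ ≤ X := Real.rpow_le_self_of_one_le hX1 ha1
  have hlog : 0 < Real.log ⌊(X / C) ^ a⌋₊ := Real.log_pos (by exact_mod_cast hfloor)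
  calc (2 * C ^ a)⁻¹ * X ^ a / Real.log X = (X / C) ^ a / 2 / Real.log X := by
        rw [Real.div_rpow (by positivity) (by positivity)]; ring
    _ ≤ ⌊(X / C) ^ a⌋₊ / Real.log ⌊(X / C) ^ a⌋₊ := by
        gcongr
        exact (Nat.div_two_lt_floor (by linarith)).le

lemma exists_mul_rpow_div_log_le_sqrt_ncard :
    ∃ c : ℝ, 0 < c ∧ ∀ᶠ X : ℝ in atTop,
      c * X ^ (1 / 6 : ℝ) / Real.log X ≤ √{d : ℤ | GoodRank5sq X d}.ncard := by
  set C : ℝ := 4 * sexticLength with hC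
  set A : ℝ := 24 * rankModulus with hA
  have hC1 : 1 ≤ C := by norm_num [hC, sexticLength]
  have hA0 : 0 < A := by norm_num [hA, rankModulus]
  have htop : Tendsto (fun X : ℝ ↦ ⌊(X / C) ^ (1 / 6 : ℝ)⌋₊) atTop atTop :=
    tendsto_nat_floor_atTop.comp ((tendsto_rpow_atTop (by norm_num)).comp
      (tendsto_id.atTop_div_const (by positivity)))
  refine ⟨(2 * C ^ (1 / 6 : ℝ))⁻¹ / A, by positivity, ?_⟩
  filter_upwards [htop.eventually eventually_div_log_le_sqrt_ncard, eventually_ge_atTop 0,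
    eventually_mul_rpow_div_log_le hC1 (a := 1 / 6) (by norm_num) (by norm_num)] with X h hX hlog
  have hle : C * (⌊(X / C) ^ (1 / 6 : ℝ)⌋₊ : ℝ) ^ 6 ≤ X :=
    calc C * (⌊(X / C) ^ (1 / 6 : ℝ)⌋₊ : ℝ) ^ 6 ≤ C * ((X / C) ^ (1 / 6 : ℝ)) ^ 6 := by
          gcongr
          exact Nat.floor_le (by positivity)
      _ = C * (X / C) := by
          rw [← Real.rpow_mul_natCast (by positivity)]
          norm_num
      _ = X := mul_div_cancel₀ _ (by positivity)
  have hsqrt := hlog.trans (h X hle)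
  rw [div_mul_eq_mul_div, div_right_comm]
  exact (div_le_iff₀' hA0).2 hsqrt

end Asymptotics

/-- There are `≫ X^(1/3)/(log X)²` imaginary quadratic fields with `|d_k| ≤ X`
whose ideal class group has 5-rank at least 2. -/
theorem count_imag_quad_5rank_two :
    ∃ c : ℝ, 0 < c ∧ ∃ X₀ : ℝ, ∀ X : ℝ, X₀ ≤ X →
      c * X ^ ((1 : ℝ) / 3) / (Real.log X) ^ 2 ≤ ({d : ℤ | GoodRank5sq X d}.ncard : ℝ) := by
  obtain ⟨c, hc, hev⟩ := exists_mul_rpow_div_log_le_sqrt_ncard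
  obtain ⟨X₀, hX₀⟩ := Filter.eventually_atTop.1 hev
  refine ⟨c ^ 2, by positivity, max X₀ 1, fun X hX ↦ ?_⟩
  obtain ⟨hXX₀, hX1⟩ := max_le_iff.1 hX
  have hlog : 0 ≤ Real.log X := Real.log_nonneg hX1
  calc c ^ 2 * X ^ ((1 : ℝ) / 3) / Real.log X ^ 2
      = (c * X ^ (1 / 6 : ℝ) / Real.log X) ^ 2 := by
        rw [div_pow, mul_pow, ← Real.rpow_mul_natCast (by positivity)]
        norm_num
    _ ≤ √{d : ℤ | GoodRank5sq X d}.ncard ^ 2 := by gcongr; exact hX₀ X hXX₀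
    _ = {d : ℤ | GoodRank5sq X d}.ncard := Real.sq_sqrt (Nat.cast_nonneg _)
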